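/- The set of codes of finite term rewriting systems R (over finite signatures) such that R is weakly confluent on every ground term is Π⁰₂-complete. -/

import Mathlib

/-!
**Upper bound.** Terms are coded bijectively by `Term.encode`, and course-of-values recursion on
codes (`Term.primrec_rec`) shows that all syntactic operations are primitive recursive. A rewrite
step is witnessed by a context, a finite substitution and a rule, so weak ground confluence says:
for every ground term with two witnessed steps there are two witnessed reductions leading to a
common term (`GWCR_iff_joins`). The matrix is primitive recursive, hence `pi02_GWCR`.

**Hardness.** Every primitive recursive function is computed on numerals by a rewriting system
whose rules are valid identities of a numerical interpretation (`Sys.exists_denotes`). Let `B` be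
the set of `n` such that for all `x` some `y` satisfies `p n x y`, and let `P n x k` be nonzero iff
the search for such a `y` halts within `k` steps. To a system computing `P` add the rules
`g x → 0`, `g x → q 0 x 0`, `q (S z) x y → 0` and `q 0 x y → q (P n x y) x (S y)`.
All rules stay valid when `g` and `q` denote `0`. If every search succeeds, then every ground term
reduces to the numeral of its value, and values are invariant under rewriting, so all peaks can be
joined (`wcr_of_complete`). If the search for some `x` fails, then every reduct of `q 0 x 0` has
root `q`, because its first argument keeps the value `0`; no reduct of `0` contains `q`. So the
peak at `g x` cannot be joined (`wcr_search_iff`).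
-/

/-- First-order terms over the fixed countably infinite set of variables
(named by naturals): a term is a variable or a function symbol (named by a
natural number) applied to a list of argument terms. -/
inductive Term : Type
  | var : ℕ → Term
  | app : ℕ → List Term → Term

namespace Term

/-- Homomorphic application of a substitution (a map from variables to terms). -/
def subst (σ : ℕ → Term) : Term → Term
  | var n => σ n
  | app f ts => app f (ts.attach.map (fun x => subst σ x.1))
decreasing_by
  have := List.sizeOf_lt_of_mem x.2
  simp only [Term.app.sizeOf_spec]; omega

/-- An injective encoding of terms into the natural numbers. -/
def encode : Term → ℕ
  | var n => Nat.pair 0 n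
  | app f ts => Nat.pair (f + 1) (Encodable.encode (ts.attach.map (fun x => encode x.1)))
decreasing_by
  have := List.sizeOf_lt_of_mem x.2
  simp only [Term.app.sizeOf_spec]; omega

end Term

/-- `IsVarOf n t` holds iff the variable `n` occurs in the term `t`. -/
inductive IsVarOf (n : ℕ) : Term → Prop
  | var : IsVarOf n (.var n)
  | app {f : ℕ} {ts : List Term} {t : Term} : t ∈ ts → IsVarOf n t → IsVarOf n (.app f ts)

/-- A term is ground if no variable occurs in it. -/
def Ground (t : Term) : Prop := ∀ n : ℕ, ¬ IsVarOf n t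

/-- A (finite) signature is presented by a finite list of pairs
(function symbol, arity); `WFSig` states that each symbol has a unique arity. -/
def WFSig (sig : List (ℕ × ℕ)) : Prop :=
  ∀ p ∈ sig, ∀ q ∈ sig, p.1 = q.1 → p.2 = q.2

/-- `WFTerm sig t`: `t` is a term over the signature `sig`, i.e. every function
symbol occurring in `t` belongs to `sig` and is applied to the correct number
of arguments. -/
inductive WFTerm (sig : List (ℕ × ℕ)) : Term → Prop
  | var (n : ℕ) : WFTerm sig (.var n)
  | app {f : ℕ} {ts : List Term} : (f, ts.length) ∈ sig →
      (∀ t ∈ ts, WFTerm sig t) → WFTerm sig (.app f ts)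

/-- `WFTRS sig R`: the finite list of rules `R` is a term rewriting system over
the signature `sig`: `sig` assigns unique arities, both sides of every rule are
terms over `sig`, no left-hand side is a variable, and every variable occurring
in a right-hand side occurs in the corresponding left-hand side. -/
def WFTRS (sig : List (ℕ × ℕ)) (R : List (Term × Term)) : Prop :=
  WFSig sig ∧ ∀ p ∈ R, WFTerm sig p.1 ∧ WFTerm sig p.2 ∧
    (∀ n : ℕ, p.1 ≠ .var n) ∧ (∀ n : ℕ, IsVarOf n p.2 → IsVarOf n p.1)

/-- The one-step rewrite relation `→_R` of a TRS `R`: application of a rule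
under a substitution, closed under arbitrary one-hole contexts (i.e. embedded
at any argument position at any depth). -/
inductive Rewrite (R : List (Term × Term)) : Term → Term → Prop
  | rule (l r : Term) (σ : ℕ → Term) (h : (l, r) ∈ R) :
      Rewrite R (l.subst σ) (r.subst σ)
  | congr (f : ℕ) (ts₁ ts₂ : List Term) (t t' : Term) (h : Rewrite R t t') :
      Rewrite R (.app f (ts₁ ++ t :: ts₂)) (.app f (ts₁ ++ t' :: ts₂))

/-- Many-step rewriting `→*_R` (reflexive-transitive closure of `→_R`). -/
def Reduces (R : List (Term × Term)) : Term → Term → Prop :=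
  Relation.ReflTransGen (Rewrite R)

/-- `t` is a normal form of `R` (admits no `→_R`-step). -/
def NormalForm (R : List (Term × Term)) (t : Term) : Prop := ∀ u : Term, ¬ Rewrite R t u

/-- `R` is strongly normalizing (terminating) on `t`:
no infinite rewrite sequence starts at `t`. -/
def SNon (R : List (Term × Term)) (t : Term) : Prop :=
  ¬ ∃ f : ℕ → Term, f 0 = t ∧ ∀ n : ℕ, Rewrite R (f n) (f (n + 1))

/-- `R` is weakly normalizing on `t`: some reduction from `t` ends in a normal form. -/
def WNon (R : List (Term × Term)) (t : Term) : Prop :=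
  ∃ s : Term, Reduces R t s ∧ NormalForm R s

/-- `R` is confluent (Church-Rosser) on `t`. -/
def CRon (R : List (Term × Term)) (t : Term) : Prop :=
  ∀ t₁ t₂ : Term, Reduces R t t₁ → Reduces R t t₂ →
    ∃ d : Term, Reduces R t₁ d ∧ Reduces R t₂ d

/-- `R` is weakly confluent (weakly Church-Rosser) on `t`. -/
def WCRon (R : List (Term × Term)) (t : Term) : Prop :=
  ∀ t₁ t₂ : Term, Rewrite R t t₁ → Rewrite R t t₂ →
    ∃ d : Term, Reduces R t₁ d ∧ Reduces R t₂ d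

/-- A root step `s →_{R,ε} t`: `s = ℓσ` and `t = rσ` for some rule `ℓ → r` of `R`. -/
def RootStep (R : List (Term × Term)) (s t : Term) : Prop :=
  ∃ (l r : Term) (σ : ℕ → Term), (l, r) ∈ R ∧ s = l.subst σ ∧ t = r.subst σ

/-- Code of a rewrite rule. -/
def encodeRule (p : Term × Term) : ℕ := Nat.pair p.1.encode p.2.encode

/-- Code of a finite TRS. -/
def encodeTRS (R : List (Term × Term)) : ℕ := Encodable.encode (R.map encodeRule)

/-- Code of a finite signature. -/
def encodeSig (sig : List (ℕ × ℕ)) : ℕ := Encodable.encode sig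

/-- A set `A ⊆ ℕ` is Σ⁰₁ (recursively enumerable) if it is the domain of a
partial computable function. -/
def Sigma01 (A : Set ℕ) : Prop :=
  ∃ f : ℕ →. ℕ, Nat.Partrec f ∧ ∀ n : ℕ, n ∈ A ↔ (f n).Dom

/-- `B` is many-one reducible to `A`: there is a total computable `g` with
`n ∈ B ↔ g n ∈ A` for all `n`. -/
def ManyOneRed (B A : Set ℕ) : Prop :=
  ∃ g : ℕ → ℕ, Computable g ∧ ∀ n : ℕ, n ∈ B ↔ g n ∈ A

/-- `A` is Σ⁰₁-complete. -/
def Sigma01Complete (A : Set ℕ) : Prop :=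
  Sigma01 A ∧ ∀ B : Set ℕ, Sigma01 B → ManyOneRed B A

/-- A set `A ⊆ ℕ` is Π⁰₂ if there is a decidable (computable) predicate
`P ⊆ ℕ³` with `n ∈ A ↔ ∀ x ∃ y, P n x y`. -/
def Pi02 (A : Set ℕ) : Prop :=
  ∃ p : ℕ → ℕ → ℕ → Bool,
    Computable (fun x : ℕ × ℕ × ℕ => p x.1 x.2.1 x.2.2) ∧
    ∀ n : ℕ, n ∈ A ↔ ∀ x : ℕ, ∃ y : ℕ, p n x y = true

/-- `A` is Π⁰₂-complete. -/
def Pi02Complete (A : Set ℕ) : Prop :=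
  Pi02 A ∧ ∀ B : Set ℕ, Pi02 B → ManyOneRed B A

/-- A set `A ⊆ ℕ` is Π¹₁ if there is a decidable (computable) predicate
`P ⊆ ℕ²` such that `n ∈ A` iff for every function `α : ℕ → ℕ` there exists
`k` with `P n ⟨α 0, …, α (k-1)⟩`, where `⟨·⟩` is the (computable) coding of
finite sequences of naturals. -/
def Pi11 (A : Set ℕ) : Prop :=
  ∃ p : ℕ → ℕ → Bool,
    Computable (fun x : ℕ × ℕ => p x.1 x.2) ∧
    ∀ n : ℕ, n ∈ A ↔ ∀ α : ℕ → ℕ, ∃ k : ℕ,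
      p n (Encodable.encode (List.ofFn (fun i : Fin k => α i))) = true

/-- `A` is Π¹₁-complete. -/
def Pi11Complete (A : Set ℕ) : Prop :=
  Pi11 A ∧ ∀ B : Set ℕ, Pi11 B → ManyOneRed B A

/-! ### The coding of terms -/

namespace Term

/-- Structural induction, with an induction hypothesis for every argument. -/
@[elab_as_elim]
theorem ind {P : Term → Prop} (hv : ∀ n, P (var n))
    (ha : ∀ f ts, (∀ t ∈ ts, P t) → P (app f ts)) : ∀ t, P t
  | var n => hv n
  | app f ts => ha f ts fun t _ht => ind hv ha t
decreasing_by
  have := List.sizeOf_lt_of_mem _ht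
  simp only [Term.app.sizeOf_spec]; omega

@[simp] theorem subst_var (σ : ℕ → Term) (n : ℕ) : (var n).subst σ = σ n := by
  rw [subst]

@[simp] theorem subst_app (σ : ℕ → Term) (f : ℕ) (ts : List Term) :
    (app f ts).subst σ = app f (ts.map (subst σ)) := by
  rw [subst]; simp

@[simp] theorem encode_var (n : ℕ) : (var n).encode = Nat.pair 0 n := by
  rw [encode]

@[simp] theorem encode_app (f : ℕ) (ts : List Term) :
    (app f ts).encode = Nat.pair (f + 1) (Encodable.encode (ts.map encode)) := by
  rw [encode]; simp

theorem encode_injective : Function.Injective encode := by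
  intro s
  induction s using ind with
  | hv n =>
    intro t h
    cases t with
    | var m => simpa using h
    | app g us => simp at h
  | ha f ts ih =>
    intro t h
    cases t with
    | var m => simp at h
    | app g us =>
      simp only [encode_app, Nat.pair_eq_pair, add_left_inj, Encodable.encode_inj] at h
      obtain ⟨rfl, h⟩ := h
      congr 1
      induction ts generalizing us with
      | nil => simpa using h.symm
      | cons a ts iht =>
        cases us with
        | nil => simp at h
        | cons b us =>
          simp only [List.map_cons, List.cons.injEq] at h
          rw [ih a (by simp) h.1, iht (fun t ht => ih t (by simp [ht])) us h.2]

theorem lt_encode_list (l : List ℕ) : ∀ x ∈ l, x < Encodable.encode l := by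
  induction l with
  | nil => simp
  | cons a l ih =>
    intro x hx
    rw [Encodable.encode_list_cons, Nat.lt_succ_iff]
    rcases List.mem_cons.1 hx with rfl | hx
    · exact Nat.left_le_pair _ _
    · exact (ih x hx).le.trans (Nat.right_le_pair _ _)

theorem encode_surjective : Function.Surjective encode := by
  intro n
  induction n using Nat.strong_induction_on with
  | _ n ih =>
    rcases hu : n.unpair with ⟨_ | a, b⟩
    · exact ⟨var b, by rw [encode_var, ← Nat.pair_unpair n, hu]⟩
    · have hn : n = Nat.pair (a + 1) b := by rw [← Nat.pair_unpair n, hu]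
      obtain ⟨l, rfl⟩ : ∃ l : List ℕ, Encodable.encode l = b :=
        ⟨Denumerable.ofNat _ b, Denumerable.encode_ofNat b⟩
      have : ∀ l' : List ℕ, (∀ x ∈ l', x < n) → ∃ ts : List Term, ts.map encode = l' := by
        intro l' hl
        induction l' with
        | nil => exact ⟨[], rfl⟩
        | cons x l' ihl =>
          obtain ⟨t, ht⟩ := ih x (hl x (by simp))
          obtain ⟨ts, hts⟩ := ihl fun y hy => hl y (by simp [hy])
          exact ⟨t :: ts, by simp [ht, hts]⟩
      obtain ⟨ts, hts⟩ := this l fun x hx => by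
        rw [hn]; exact (lt_encode_list l x hx).trans_le (Nat.right_le_pair _ _)
      exact ⟨app a ts, by rw [encode_app, hts, hn]⟩

/-- The coding of terms is a bijection with the natural numbers. -/
noncomputable def equivNat : Term ≃ ℕ :=
  Equiv.ofBijective encode ⟨encode_injective, encode_surjective⟩

/-- Terms are enumerated by `Term.encode`, so that `Primrec` on terms means
primitive recursion on their codes. -/
noncomputable instance : Denumerable Term := Denumerable.ofEquiv ℕ equivNat

theorem code_eq (t : Term) : Encodable.encode t = t.encode := rfl

@[simp] theorem equivNat_symm_code (t : Term) : equivNat.symm (Encodable.encode t) = t :=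
  equivNat.symm_apply_apply t

theorem code_list_eq (ts : List Term) :
    Encodable.encode ts = Encodable.encode (ts.map encode) := by
  induction ts with
  | nil => rfl
  | cons t ts ih => simp [Encodable.encode_list_cons, ih, code_eq]

theorem code_var (n : ℕ) : Encodable.encode (var n) = Nat.pair 0 n := encode_var n

theorem code_app (f : ℕ) (ts : List Term) :
    Encodable.encode (app f ts) = Nat.pair (f + 1) (Encodable.encode ts) := by
  rw [code_eq, encode_app, code_list_eq]

theorem primrec_var : Primrec var :=
  Primrec.encode_iff.1 <| (Primrec₂.natPair.comp (.const 0) .id).of_eq fun n => (code_var n).symm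

theorem primrec_app : Primrec₂ app :=
  Primrec₂.encode_iff.1 <| (Primrec₂.natPair.comp (Primrec.succ.comp .fst)
    (Primrec.encode.comp .snd)).of_eq fun n => (code_app n.1 n.2).symm

theorem code_lt_of_mem {f : ℕ} {ts : List Term} {t : Term} (h : t ∈ ts) :
    Encodable.encode t < Encodable.encode (app f ts) := by
  rw [code_app, code_list_eq]
  exact (lt_encode_list _ _ (List.mem_map_of_mem h)).trans_le (Nat.right_le_pair _ _)

/-- Structural recursion on terms is primitive recursive. It is course-of-values recursion
on codes, since the arguments of a term have smaller codes than the term. -/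
theorem primrec_rec {α σ : Type} [Primcodable α] [Primcodable σ] {f : α → Term → σ}
    {gv : α → ℕ → σ} {ga : α → ℕ × List Term × List σ → σ}
    (hgv : Primrec₂ gv) (hga : Primrec₂ ga)
    (hv : ∀ a n, f a (var n) = gv a n)
    (ha : ∀ a c ts, f a (app c ts) = ga a (c, ts, ts.map (f a))) : Primrec₂ f := by
  have key : Primrec₂ fun (a : α) (n : ℕ) => f a (Denumerable.ofNat Term n) := by
    -- The code of a term is the length of the list `prev` of values at smaller codes.
    let g : α → List σ → Option σ := fun a prev =>
      let u := prev.length.unpair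
      let ts := Denumerable.ofNat (List Term) u.2
      if u.1 = 0 then some (gv a u.2)
      else some (ga a (u.1 - 1, ts, ts.filterMap fun t => prev[Encodable.encode t]?))
    have hg : Primrec₂ g := by
      have hu : Primrec fun p : α × List σ => p.2.length.unpair :=
        Primrec.unpair.comp (Primrec.list_length.comp .snd)
      have hts : Primrec fun p : α × List σ =>
          Denumerable.ofNat (List Term) p.2.length.unpair.2 :=
        (Primrec.ofNat _).comp (Primrec.snd.comp hu)
      refine Primrec.ite (Primrec.eq.comp (Primrec.fst.comp hu) (.const 0))
        (Primrec.option_some.comp (hgv.comp .fst (Primrec.snd.comp hu)))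
        (Primrec.option_some.comp (hga.comp .fst (.pair
          (Primrec.nat_sub.comp (Primrec.fst.comp hu) (.const 1)) (.pair hts ?_))))
      refine Primrec.listFilterMap hts ?_
      exact Primrec.list_getElem?.comp (Primrec.snd.comp .fst) (Primrec.encode.comp .snd)
    refine Primrec.nat_strong_rec _ hg fun a n => ?_
    obtain ⟨t, rfl⟩ : ∃ t : Term, Encodable.encode t = n :=
      ⟨Denumerable.ofNat _ n, Denumerable.encode_ofNat n⟩
    cases t with
    | var m =>
      simp only [g, List.length_map, List.length_range]
      rw [code_var, Nat.unpair_pair, ← code_var]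
      simp [hv]
    | app c ts =>
      simp only [g, List.length_map, List.length_range, Denumerable.ofNat_encode]
      rw [code_app, Nat.unpair_pair]
      simp only [Nat.add_eq_zero_iff, one_ne_zero, and_false, if_false, Nat.add_sub_cancel,
        Denumerable.ofNat_encode, ha, Option.some.injEq]
      congr 3
      rw [← code_app, List.filterMap_eq_map_iff_forall_eq_some.2]
      intro t ht
      simp [code_lt_of_mem (f := c) ht]
  exact (key.comp .fst (Primrec.encode.comp .snd)).of_eq fun p => by simp

end Term

/-! ### Primitive recursive operations on terms -/

namespace Term

/-- The list of variable occurrences of a term. -/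
def vars : Term → List ℕ
  | var n => [n]
  | app _ ts => (ts.attach.map fun x => vars x.1).flatten
decreasing_by
  have := List.sizeOf_lt_of_mem x.2
  simp only [Term.app.sizeOf_spec]; omega

@[simp] theorem vars_var (n : ℕ) : (var n).vars = [n] := by
  rw [vars]

@[simp] theorem vars_app (f : ℕ) (ts : List Term) : (app f ts).vars = (ts.map vars).flatten := by
  rw [vars]; simp

theorem mem_vars {n : ℕ} {t : Term} : n ∈ t.vars ↔ IsVarOf n t := by
  induction t using ind with
  | hv m =>
    rw [vars_var, List.mem_singleton]
    exact ⟨fun h => h ▸ .var, fun h => by cases h; rfl⟩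
  | ha f ts ih =>
    simp only [vars_app, List.mem_flatten, List.mem_map, exists_exists_and_eq_and]
    constructor
    · rintro ⟨t, ht, h⟩
      exact .app ht ((ih t ht).1 h)
    · rintro (_ | ⟨ht, h⟩)
      exact ⟨_, ht, (ih _ ht).2 h⟩

theorem ground_iff (t : Term) : Ground t ↔ t.vars = [] := by
  simp [Ground, ← mem_vars, List.eq_nil_iff_forall_not_mem]

theorem subst_congr {σ τ : ℕ → Term} {t : Term} (h : ∀ n ∈ t.vars, σ n = τ n) :
    t.subst σ = t.subst τ := by
  induction t using ind with
  | hv n => simpa using h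
  | ha f ts ih =>
    simp only [subst_app, app.injEq, true_and, List.map_inj_left]
    intro t ht
    refine ih t ht fun n hn => h n ?_
    simp only [vars_app, List.mem_flatten, List.mem_map, exists_exists_and_eq_and]
    exact ⟨t, ht, hn⟩

theorem primrec_vars : Primrec vars := by
  have : Primrec₂ fun (_ : Unit) t => vars t :=
    primrec_rec (gv := fun _ n => [n]) (ga := fun _ x => x.2.2.flatten)
      (Primrec.list_cons.comp .snd (.const []))
      (Primrec.list_flatten.comp (Primrec.snd.comp (Primrec.snd.comp .snd)))
      (fun _ n => vars_var n) fun _ f ts => vars_app f ts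
  exact this.comp (.const ()) .id

/-- Instantiation by a finite list of terms, the `i`-th entry replacing the variable `i`. -/
def substL (σ : List Term) (t : Term) : Term := t.subst fun n => σ.getD n (var 0)

theorem primrec_substL : Primrec₂ substL :=
  primrec_rec (gv := fun σ n => σ.getD n (var 0)) (ga := fun _ x => app x.1 x.2.2)
    (Primrec.list_getD _)
    (primrec_app.comp (Primrec.fst.comp .snd) (Primrec.snd.comp (Primrec.snd.comp .snd)))
    (fun σ n => by simp [substL]) (fun σ c ts => by simp only [substL, subst_app]; rfl)

/-- A rule only sees finitely many variables, so finite substitutions suffice. -/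
theorem exists_substL (σ : ℕ → Term) (l r : Term) :
    ∃ τ, substL τ l = l.subst σ ∧ substL τ r = r.subst σ := by
  let N := (l.vars ++ r.vars).sum + 1
  have hN : ∀ n ∈ l.vars ++ r.vars, n < N := fun n hn => Nat.lt_succ_of_le (List.le_sum_of_mem hn)
  refine ⟨(List.range N).map σ, subst_congr fun n hn => ?_, subst_congr fun n hn => ?_⟩
  · simp [List.getD, hN n (by simp [hn])]
  · simp [List.getD, hN n (by simp [hn])]

end Term

open Term

theorem primrecRel_mem {α : Type} [Primcodable α] : PrimrecRel fun (l : List α) (a : α) => a ∈ l :=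
  (PrimrecRel.exists_mem_list Primrec.eq).of_eq fun l a => by simp

theorem PrimrecPred.imp' {α : Type} [Primcodable α] {p q : α → Prop} (hp : PrimrecPred p)
    (hq : PrimrecPred q) : PrimrecPred fun a => p a → q a :=
  (hp.not.or hq).of_eq fun a => by tauto

theorem primrecRel_wfTerm : PrimrecRel fun (t : Term) (sig : List (ℕ × ℕ)) => WFTerm sig t := by
  classical
  have : Primrec₂ fun (sig : List (ℕ × ℕ)) (t : Term) => decide (WFTerm sig t) := by
    refine primrec_rec (gv := fun _ _ => true)
      (ga := fun sig x => decide ((x.1, x.2.1.length) ∈ sig ∧ ∀ b ∈ x.2.2, b = true))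
      (Primrec.const true) ?_ (fun sig n => by simp [WFTerm.var]) (fun sig c ts => ?_)
    · refine (PrimrecPred.and ?_ ?_).decide
      · exact primrecRel_mem.comp Primrec.fst ((Primrec.fst.comp .snd).pair
          (Primrec.list_length.comp (Primrec.fst.comp (Primrec.snd.comp .snd))))
      · exact (PrimrecPred.forall_mem_list (Primrec.eq.comp Primrec.id (.const true))).comp
          (Primrec.snd.comp (Primrec.snd.comp .snd))
    · rw [decide_eq_decide]
      simp only [List.mem_map, forall_exists_index, and_imp, forall_apply_eq_imp_iff₂,
        decide_eq_true_eq]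
      exact ⟨fun h => by cases h with | app h1 h2 => exact ⟨h1, h2⟩, fun h => .app h.1 h.2⟩
  exact Primrec.primrecPred (this.comp Primrec.snd Primrec.fst)

theorem primrecPred_wfSig : PrimrecPred WFSig := by
  have h1 : PrimrecRel fun (q p : ℕ × ℕ) => p.1 = q.1 → p.2 = q.2 :=
    PrimrecPred.imp'
      (Primrec.eq.comp (Primrec.fst.comp .snd) (Primrec.fst.comp .fst))
      (Primrec.eq.comp (Primrec.snd.comp .snd) (Primrec.snd.comp .fst))
  have h2 : PrimrecRel fun (p : ℕ × ℕ) (l : List (ℕ × ℕ)) => ∀ q ∈ l, p.1 = q.1 → p.2 = q.2 :=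
    (PrimrecRel.forall_mem_list h1).comp Primrec.snd Primrec.fst
  exact (PrimrecRel.forall_mem_list h2).comp Primrec.id Primrec.id

theorem primrecRel_wfTRS : PrimrecRel WFTRS := by
  have hsub : PrimrecRel fun (l m : List ℕ) => ∀ n ∈ l, n ∈ m :=
    PrimrecRel.forall_mem_list (R := fun (n : ℕ) (m : List ℕ) => n ∈ m)
      (primrecRel_mem.comp Primrec.snd Primrec.fst)
  -- A term is a variable exactly when the first component of its code is `0`.
  have hnv : PrimrecPred fun t : Term => ∀ n, t ≠ .var n :=
    (PrimrecPred.not (Primrec.eq.comp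
      (Primrec.fst.comp (Primrec.unpair.comp Primrec.encode)) (.const 0))).of_eq fun t => by
        cases t with
        | var n => rw [code_var]; simp
        | app c ts => rw [code_app]; simp
  have hrule : PrimrecRel fun (p : Term × Term) (sig : List (ℕ × ℕ)) =>
      WFTerm sig p.1 ∧ WFTerm sig p.2 ∧
      (∀ n : ℕ, p.1 ≠ .var n) ∧ (∀ n : ℕ, IsVarOf n p.2 → IsVarOf n p.1) := by
    refine PrimrecPred.and (primrecRel_wfTerm.comp (Primrec.fst.comp .fst) Primrec.snd) <|
      PrimrecPred.and (primrecRel_wfTerm.comp (Primrec.snd.comp .fst) Primrec.snd) <|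
      PrimrecPred.and (hnv.comp (Primrec.fst.comp .fst)) ?_
    refine (hsub.comp (primrec_vars.comp (Primrec.snd.comp Primrec.fst))
      (primrec_vars.comp (Primrec.fst.comp Primrec.fst))).of_eq fun x => ?_
    simp [mem_vars]
  exact PrimrecPred.and (primrecPred_wfSig.comp Primrec.fst)
    ((PrimrecRel.forall_mem_list hrule).comp Primrec.snd Primrec.fst)

/-! ### Weak ground confluence is a `Π⁰₂` property -/

/-- A one-hole context, as the list of its layers from the root to the hole: the function symbol
with the arguments to the left and to the right of the hole. -/
abbrev Ctx := List (ℕ × List Term × List Term)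

/-- Fill the hole of a context. -/
def plug (C : Ctx) (t : Term) : Term :=
  C.foldr (fun c s => .app c.1 (c.2.1 ++ s :: c.2.2)) t

/-- A witness for a rewrite step: context, substitution and rule. -/
abbrev Wit := Ctx × List Term × Term × Term

open Classical in
/-- The result of the step described by a witness, if it is a step from the given term. -/
noncomputable def step (R : List (Term × Term)) (w : Wit) (t : Term) : Option Term :=
  if w.2.2 ∈ R ∧ t = plug w.1 (substL w.2.1 w.2.2.1) then
    some (plug w.1 (substL w.2.1 w.2.2.2)) else none

/-- Run a sequence of witnessed steps. -/
noncomputable def run (R : List (Term × Term)) (ws : List Wit) (o : Option Term) : Option Term :=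
  ws.foldl (fun o w => o.bind (step R w)) o

theorem rewrite_iff {R : List (Term × Term)} {t t' : Term} :
    Rewrite R t t' ↔ ∃ w, step R w t = some t' := by
  constructor
  · intro h
    induction h with
    | rule l r σ h =>
      obtain ⟨τ, h1, h2⟩ := exists_substL σ l r
      exact ⟨([], τ, l, r), by simp [step, plug, h, h1, h2]⟩
    | congr f ts₁ ts₂ t t' h ih =>
      obtain ⟨⟨C, τ, l, r⟩, hw⟩ := ih
      refine ⟨((f, ts₁, ts₂) :: C, τ, l, r), ?_⟩
      simp only [step, Option.ite_none_right_eq_some, Option.some.injEq] at hw ⊢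
      obtain ⟨⟨h1, rfl⟩, rfl⟩ := hw
      exact ⟨⟨h1, rfl⟩, rfl⟩
  · rintro ⟨⟨C, τ, l, r⟩, hw⟩
    simp only [step, Option.ite_none_right_eq_some, Option.some.injEq] at hw
    obtain ⟨⟨h1, rfl⟩, rfl⟩ := hw
    induction C with
    | nil => exact .rule l r _ h1
    | cons c C ih => exact .congr _ _ _ _ _ ih

theorem reduces_iff {R : List (Term × Term)} {t t' : Term} :
    Reduces R t t' ↔ ∃ ws, run R ws (some t) = some t' := by
  constructor
  · intro h
    induction h with
    | refl => exact ⟨[], rfl⟩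
    | tail _ h ih =>
      obtain ⟨ws, hws⟩ := ih
      obtain ⟨w, hw⟩ := rewrite_iff.1 h
      refine ⟨ws ++ [w], ?_⟩
      rw [run] at hws ⊢
      rw [List.foldl_append, hws]
      exact hw
  · rintro ⟨ws, h⟩
    induction ws using List.reverseRecOn generalizing t' with
    | nil => cases h; exact .refl
    | append_singleton ws w ih =>
      rw [run, List.foldl_append] at h
      obtain ⟨s, hs, hw⟩ := Option.bind_eq_some_iff.1 h
      exact (ih hs).tail (rewrite_iff.2 ⟨w, hw⟩)

theorem primrec_plug : Primrec₂ plug := by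
  refine Primrec.list_foldr (f := fun x : Ctx × Term => x.1) (g := fun x => x.2)
    (h := fun _ y => Term.app y.1.1 (y.1.2.1 ++ y.2 :: y.1.2.2)) .fst .snd ?_
  refine primrec_app.comp (Primrec.fst.comp (Primrec.fst.comp .snd)) <|
    Primrec.list_append.comp
      (Primrec.fst.comp (Primrec.snd.comp (Primrec.fst.comp .snd)))
      (Primrec.list_cons.comp (Primrec.snd.comp .snd)
        (Primrec.snd.comp (Primrec.snd.comp (Primrec.fst.comp .snd))))

theorem primrec_step :
    Primrec fun x : List (Term × Term) × Wit × Term => step x.1 x.2.1 x.2.2 := by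
  classical
  have hw : Primrec fun x : List (Term × Term) × Wit × Term => x.2.1 := Primrec.fst.comp .snd
  have hC := Primrec.fst.comp hw
  have hσ := Primrec.fst.comp (Primrec.snd.comp hw)
  have hr := Primrec.snd.comp (Primrec.snd.comp hw)
  refine Primrec.ite (PrimrecPred.and (primrecRel_mem.comp Primrec.fst hr)
    (Primrec.eq.comp (Primrec.snd.comp .snd)
      (primrec_plug.comp hC (primrec_substL.comp hσ (Primrec.fst.comp hr)))))
    (Primrec.option_some.comp
      (primrec_plug.comp hC (primrec_substL.comp hσ (Primrec.snd.comp hr)))) (.const none)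

theorem primrec_run : Primrec fun x : List (Term × Term) × List Wit × Option Term =>
    run x.1 x.2.1 x.2.2 := by
  refine Primrec.list_foldl (h := fun x (y : Option Term × Wit) => y.1.bind (step x.1 y.2))
    (Primrec.fst.comp .snd) (Primrec.snd.comp .snd) ?_
  exact Primrec.option_bind (Primrec.fst.comp .snd) (primrec_step.comp
    (.pair (Primrec.fst.comp (Primrec.fst.comp .fst))
      (.pair (Primrec.snd.comp (Primrec.snd.comp .fst)) .snd)))

theorem code_sys (sig : List (ℕ × ℕ)) (R : List (Term × Term)) :
    Nat.pair (encodeSig sig) (encodeTRS R) = Encodable.encode (sig, R) := by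
  have : encodeTRS R = Encodable.encode R := by
    rw [encodeTRS]
    induction R with
    | nil => rfl
    | cons p R ih => simp only [List.map_cons, Encodable.encode_list_cons, ih]; rfl
  rw [this]; rfl

/-- The set of codes of weakly ground confluent systems. -/
def GWCR : Set ℕ := { n : ℕ | ∃ (sig : List (ℕ × ℕ)) (R : List (Term × Term)),
      WFTRS sig R ∧ n = Nat.pair (encodeSig sig) (encodeTRS R) ∧
      ∀ t : Term, WFTerm sig t → Ground t → WCRon R t }

theorem code_mem_GWCR (s : List (ℕ × ℕ) × List (Term × Term)) : Encodable.encode s ∈ GWCR ↔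
    WFTRS s.1 s.2 ∧ ∀ t : Term, WFTerm s.1 t → Ground t → WCRon s.2 t := by
  constructor
  · rintro ⟨sig, R, h, hn, h'⟩
    rw [code_sys, Encodable.encode_inj] at hn
    subst hn
    exact ⟨h, h'⟩
  · rintro ⟨h, h'⟩
    exact ⟨s.1, s.2, h, (code_sys _ _).symm, h'⟩

/-- The matrix of the `∀∃` form of weak ground confluence: `x` is a term with two witnesses for
a peak, and `y` consists of two witnessed reductions joining it. -/
def Joins (s : List (ℕ × ℕ) × List (Term × Term)) (x : Term × Wit × Wit)
    (y : List Wit × List Wit) : Prop :=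
  WFTRS s.1 s.2 ∧
    ((WFTerm s.1 x.1 ∧ x.1.vars = []) ∧
        (step s.2 x.2.1 x.1).isSome = true ∧ (step s.2 x.2.2 x.1).isSome = true →
      run s.2 y.1 (step s.2 x.2.1 x.1) = run s.2 y.2 (step s.2 x.2.2 x.1) ∧
        (run s.2 y.1 (step s.2 x.2.1 x.1)).isSome = true)

theorem primrecPred_joins : PrimrecPred fun z :
    (List (ℕ × ℕ) × List (Term × Term)) × (Term × Wit × Wit) × List Wit × List Wit =>
      Joins z.1 z.2.1 z.2.2 := by
  let T := (List (ℕ × ℕ) × List (Term × Term)) × (Term × Wit × Wit) × List Wit × List Wit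
  have hsig : Primrec fun z : T => z.1.1 := Primrec.fst.comp .fst
  have hR : Primrec fun z : T => z.1.2 := Primrec.snd.comp .fst
  have ht : Primrec fun z : T => z.2.1.1 := Primrec.fst.comp (Primrec.fst.comp .snd)
  have hw : Primrec fun z : T => z.2.1.2 := Primrec.snd.comp (Primrec.fst.comp .snd)
  have h1 : Primrec fun z : T => step z.1.2 z.2.1.2.1 z.2.1.1 :=
    primrec_step.comp (hR.pair ((Primrec.fst.comp hw).pair ht))
  have h2 : Primrec fun z : T => step z.1.2 z.2.1.2.2 z.2.1.1 :=
    primrec_step.comp (hR.pair ((Primrec.snd.comp hw).pair ht))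
  have r1 : Primrec fun z : T => run z.1.2 z.2.2.1 (step z.1.2 z.2.1.2.1 z.2.1.1) :=
    primrec_run.comp (hR.pair ((Primrec.fst.comp (Primrec.snd.comp .snd)).pair h1))
  have r2 : Primrec fun z : T => run z.1.2 z.2.2.2 (step z.1.2 z.2.1.2.2 z.2.1.1) :=
    primrec_run.comp (hR.pair ((Primrec.snd.comp (Primrec.snd.comp .snd)).pair h2))
  have hs : ∀ {f : T → Option Term}, Primrec f → PrimrecPred fun z => (f z).isSome = true :=
    fun hf => Primrec.eq.comp (Primrec.option_isSome.comp hf) (.const true)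
  refine PrimrecPred.and (primrecRel_wfTRS.comp hsig hR) (PrimrecPred.imp' ?_ ?_)
  · exact PrimrecPred.and (PrimrecPred.and (primrecRel_wfTerm.comp ht hsig)
      (Primrec.eq.comp (primrec_vars.comp ht) (.const []))) (PrimrecPred.and (hs h1) (hs h2))
  · exact PrimrecPred.and (Primrec.eq.comp r1 r2) (hs r1)

theorem GWCR_iff_joins (s : List (ℕ × ℕ) × List (Term × Term)) :
    Encodable.encode s ∈ GWCR ↔ ∀ x, ∃ y, Joins s x y := by
  rw [code_mem_GWCR]
  constructor
  · rintro ⟨hW, h⟩ ⟨t, w₁, w₂⟩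
    by_cases hp : (WFTerm s.1 t ∧ t.vars = []) ∧
        (step s.2 w₁ t).isSome = true ∧ (step s.2 w₂ t).isSome = true
    · obtain ⟨⟨ht, hg⟩, h1, h2⟩ := hp
      obtain ⟨t₁, h1⟩ := Option.isSome_iff_exists.1 h1
      obtain ⟨t₂, h2⟩ := Option.isSome_iff_exists.1 h2
      obtain ⟨d, hd1, hd2⟩ := h t ht ((ground_iff t).2 hg) t₁ t₂
        (rewrite_iff.2 ⟨_, h1⟩) (rewrite_iff.2 ⟨_, h2⟩)
      obtain ⟨ws₁, hws₁⟩ := reduces_iff.1 hd1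
      obtain ⟨ws₂, hws₂⟩ := reduces_iff.1 hd2
      exact ⟨(ws₁, ws₂), hW, fun _ => by simp [h1, h2, hws₁, hws₂]⟩
    · exact ⟨([], []), hW, fun h => absurd h hp⟩
  · intro h
    refine ⟨(h (.var 0, ([], [], .var 0, .var 0), ([], [], .var 0, .var 0))).choose_spec.1, ?_⟩
    intro t ht hg t₁ t₂ h1 h2
    obtain ⟨w₁, h1⟩ := rewrite_iff.1 h1
    obtain ⟨w₂, h2⟩ := rewrite_iff.1 h2
    obtain ⟨⟨ws₁, ws₂⟩, -, hy⟩ := h (t, w₁, w₂)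
    obtain ⟨he, hs⟩ := hy ⟨⟨ht, (ground_iff t).1 hg⟩, by simp [h1], by simp [h2]⟩
    obtain ⟨d, hd⟩ := Option.isSome_iff_exists.1 hs
    simp only [h1, h2] at he hd
    exact ⟨d, reduces_iff.2 ⟨ws₁, hd⟩, reduces_iff.2 ⟨ws₂, he ▸ hd⟩⟩

theorem pi02_GWCR : Pi02 GWCR := by
  classical
  refine ⟨fun n x y => decide (Joins (Denumerable.ofNat _ n) (Denumerable.ofNat _ x)
    (Denumerable.ofNat _ y)), ?_, fun n => ?_⟩
  · refine Primrec.to_comp (PrimrecPred.decide ?_)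
    exact primrecPred_joins.comp (((Primrec.ofNat _).comp .fst).pair
      (((Primrec.ofNat _).comp (Primrec.fst.comp .snd)).pair
        ((Primrec.ofNat _).comp (Primrec.snd.comp .snd))))
  · conv_lhs => rw [← Denumerable.encode_ofNat (α := List (ℕ × ℕ) × List (Term × Term)) n]
    rw [GWCR_iff_joins]
    simp only [decide_eq_true_eq]
    constructor
    · intro h x
      obtain ⟨y, hy⟩ := h (Denumerable.ofNat _ x)
      exact ⟨Encodable.encode y, by rwa [Denumerable.ofNat_encode]⟩
    · intro h x
      obtain ⟨y, hy⟩ := h (Encodable.encode x)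
      rw [Denumerable.ofNat_encode] at hy
      exact ⟨_, hy⟩

/-! ### Evaluation of terms -/

/-- The value of a term when the function symbol `f` denotes the operation `I f`
and the variable `n` denotes `ρ n`. -/
def Term.eval (I : ℕ → List ℕ → ℕ) (ρ : ℕ → ℕ) : Term → ℕ
  | var n => ρ n
  | app f ts => I f (ts.attach.map fun x => eval I ρ x.1)
decreasing_by
  have := List.sizeOf_lt_of_mem x.2
  simp only [Term.app.sizeOf_spec]; omega

@[simp] theorem eval_var (I : ℕ → List ℕ → ℕ) (ρ : ℕ → ℕ) (n : ℕ) : (var n).eval I ρ = ρ n := by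
  rw [eval]

@[simp] theorem eval_app (I : ℕ → List ℕ → ℕ) (ρ : ℕ → ℕ) (f : ℕ) (ts : List Term) :
    (app f ts).eval I ρ = I f (ts.map (eval I ρ)) := by
  rw [eval]; simp

theorem eval_subst (I : ℕ → List ℕ → ℕ) (ρ : ℕ → ℕ) (σ : ℕ → Term) (t : Term) :
    (t.subst σ).eval I ρ = t.eval I fun n => (σ n).eval I ρ := by
  induction t using ind with
  | hv n => simp
  | ha f ts ih =>
    simp only [subst_app, eval_app, List.map_map]
    congr 1
    exact List.map_congr_left ih

/-- Two interpretations agree on the symbols of a signature. -/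
def Agree (sig : List (ℕ × ℕ)) (I J : ℕ → List ℕ → ℕ) : Prop := ∀ p ∈ sig, J p.1 = I p.1

theorem eval_agree {sig : List (ℕ × ℕ)} {I J : ℕ → List ℕ → ℕ} (h : Agree sig I J) (ρ : ℕ → ℕ)
    {t : Term} (ht : WFTerm sig t) : t.eval J ρ = t.eval I ρ := by
  induction ht with
  | var n => simp
  | app hf _ ih =>
    simp only [eval_app]
    rw [h _ hf]
    congr 1
    exact List.map_congr_left ih

/-- Every rule is a valid identity of the interpretation. -/
def Sound (R : List (Term × Term)) (I : ℕ → List ℕ → ℕ) : Prop :=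
  ∀ p ∈ R, ∀ ρ, p.1.eval I ρ = p.2.eval I ρ

/-- Rewriting preserves values. -/
theorem Rewrite.eval_eq {R : List (Term × Term)} {I : ℕ → List ℕ → ℕ} (hS : Sound R I)
    (ρ : ℕ → ℕ) {t t' : Term} (h : Rewrite R t t') : t.eval I ρ = t'.eval I ρ := by
  induction h with
  | rule l r σ h => rw [eval_subst, eval_subst]; exact hS _ h _
  | congr f ts₁ ts₂ t t' h ih => simp [ih]

/-! ### Numerals and reductions -/

/-- The numeral of `n`, with `0` as zero and `1` as successor symbol. -/
def num : ℕ → Term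
  | 0 => .app 0 []
  | n + 1 => .app 1 [num n]

@[simp] theorem subst_num (σ : ℕ → Term) (n : ℕ) : (num n).subst σ = num n := by
  induction n with
  | zero => simp [num]
  | succ n ih => simp [num, ih]

theorem Reduces.mono {R R' : List (Term × Term)} (h : ∀ p ∈ R, p ∈ R') {t t' : Term}
    (ht : Reduces R t t') : Reduces R' t t' := by
  refine Relation.ReflTransGen.mono (fun a b hab => ?_) _ _ ht
  induction hab with
  | rule l r σ hm => exact .rule l r σ (h _ hm)
  | congr f ts₁ ts₂ t t' _ ih => exact .congr f ts₁ ts₂ t t' ih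

theorem Reduces.congr {R : List (Term × Term)} (f : ℕ) (ts₁ ts₂ : List Term) {t t' : Term}
    (h : Reduces R t t') : Reduces R (.app f (ts₁ ++ t :: ts₂)) (.app f (ts₁ ++ t' :: ts₂)) :=
  Relation.ReflTransGen.lift (fun s => Term.app f (ts₁ ++ s :: ts₂))
    (fun _ _ => Rewrite.congr f ts₁ ts₂ _ _) _ _ h

theorem Reduces.args {R : List (Term × Term)} (f : ℕ) {ts us : List Term}
    (h : List.Forall₂ (Reduces R) ts us) : Reduces R (.app f ts) (.app f us) := by
  suffices ∀ pre, Reduces R (.app f (pre ++ ts)) (.app f (pre ++ us)) from this []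
  induction h with
  | nil => exact fun pre => .refl
  | @cons t u ts us h _ ih =>
    intro pre
    have := ih (pre ++ [u])
    simp only [List.append_assoc, List.singleton_append] at this
    exact (Reduces.congr f pre ts h).trans this

theorem Reduces.rule {R : List (Term × Term)} {l r : Term} (h : (l, r) ∈ R) (σ : ℕ → Term)
    {s t : Term} (hs : l.subst σ = s) (ht : r.subst σ = t) : Reduces R s t :=
  hs ▸ ht ▸ .single (.rule l r σ h)

/-- Every symbol of the signature, applied to numerals, reduces to the numeral of its value. -/
def Complete (sig : List (ℕ × ℕ)) (R : List (Term × Term)) (I : ℕ → List ℕ → ℕ) : Prop :=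
  ∀ p ∈ sig, ∀ xs : List ℕ, xs.length = p.2 → Reduces R (.app p.1 (xs.map num)) (num (I p.1 xs))

/-- Ground terms over a signature. -/
def GWF (sig : List (ℕ × ℕ)) (t : Term) : Prop := WFTerm sig t ∧ t.vars = []

theorem gwf_app {sig : List (ℕ × ℕ)} {f : ℕ} {ts : List Term} :
    GWF sig (.app f ts) ↔ (f, ts.length) ∈ sig ∧ ∀ t ∈ ts, GWF sig t := by
  simp only [GWF, vars_app, List.flatten_eq_nil_iff, List.mem_map, forall_exists_index, and_imp,
    forall_apply_eq_imp_iff₂]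
  constructor
  · rintro ⟨h, hv⟩
    cases h with | app h1 h2 => exact ⟨h1, fun t ht => ⟨h2 t ht, hv t ht⟩⟩
  · rintro ⟨h, hv⟩
    exact ⟨.app h fun t ht => (hv t ht).1, fun t ht => (hv t ht).2⟩

theorem not_gwf_var {sig : List (ℕ × ℕ)} {n : ℕ} : ¬ GWF sig (.var n) := by simp [GWF]

theorem GWF.subst {sig : List (ℕ × ℕ)} {σ : ℕ → Term} {t : Term} (ht : WFTerm sig t)
    (h : ∀ n ∈ t.vars, GWF sig (σ n)) : GWF sig (t.subst σ) := by
  induction ht with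
  | var n => simpa using h
  | @app f ts hf _ ih =>
    rw [subst_app, gwf_app]
    refine ⟨by simpa using hf, ?_⟩
    simp only [List.mem_map, forall_exists_index, and_imp, forall_apply_eq_imp_iff₂]
    intro t ht
    refine ih t ht fun n hn => h n ?_
    simp only [vars_app, List.mem_flatten, List.mem_map, exists_exists_and_eq_and]
    exact ⟨t, ht, hn⟩

theorem GWF.of_subst {sig : List (ℕ × ℕ)} {σ : ℕ → Term} {t : Term}
    (h : GWF sig (t.subst σ)) : ∀ n ∈ t.vars, GWF sig (σ n) := by
  induction t using ind with
  | hv n => simpa using h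
  | ha f ts ih =>
    rw [subst_app, gwf_app] at h
    simp only [List.mem_map, forall_exists_index, and_imp, forall_apply_eq_imp_iff₂] at h
    intro n hn
    simp only [vars_app, List.mem_flatten, List.mem_map, exists_exists_and_eq_and] at hn
    obtain ⟨t, ht, hn⟩ := hn
    exact ih t ht (h.2 t ht) n hn

theorem GWF.rewrite {sig : List (ℕ × ℕ)} {R : List (Term × Term)} (hR : WFTRS sig R)
    {t t' : Term} (h : Rewrite R t t') : GWF sig t → GWF sig t' := by
  induction h with
  | rule l r σ hm =>
    obtain ⟨-, hr, -, hv⟩ := hR.2 _ hm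
    intro h
    refine GWF.subst hr fun n hn => h.of_subst n ?_
    exact mem_vars.2 (hv n (mem_vars.1 hn))
  | congr f ts₁ ts₂ t t' _ ih =>
    simp only [gwf_app, List.length_append, List.length_cons, List.mem_append, List.mem_cons]
    rintro ⟨h1, h2⟩
    refine ⟨h1, ?_⟩
    rintro s (hs | rfl | hs)
    · exact h2 s (.inl hs)
    · exact ih (h2 t (.inr (.inl rfl)))
    · exact h2 s (.inr (.inr hs))

/-- Every ground term reduces to the numeral of its value, innermost symbols first. -/
theorem GWF.reduces_num {sig : List (ℕ × ℕ)} {R : List (Term × Term)} {I : ℕ → List ℕ → ℕ}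
    (hC : Complete sig R I) {t : Term} (h : GWF sig t) : Reduces R t (num (t.eval I 0)) := by
  induction t using ind with
  | hv n => exact absurd h not_gwf_var
  | ha f ts ih =>
    rw [gwf_app] at h
    have h1 : Reduces R (.app f ts) (.app f ((ts.map (eval I 0)).map num)) := by
      refine Reduces.args f ?_
      rw [List.map_map, List.forall₂_map_right_iff, List.forall₂_same]
      exact fun t ht => ih t ht (h.2 t ht)
    rw [eval_app]
    exact h1.trans (hC _ h.1 _ (by simp))

/-- If the rules are valid identities of an interpretation in which every symbol is computed
on numerals, then the system is weakly ground confluent. -/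
theorem wcr_of_complete {sig : List (ℕ × ℕ)} {R : List (Term × Term)} {I : ℕ → List ℕ → ℕ}
    (hR : WFTRS sig R) (hS : Sound R I) (hC : Complete sig R I) (t : Term) (ht : WFTerm sig t)
    (hg : Ground t) : WCRon R t := by
  intro t₁ t₂ h₁ h₂
  have hG : GWF sig t := ⟨ht, (ground_iff t).1 hg⟩
  refine ⟨num (t.eval I 0), ?_, ?_⟩
  · rw [h₁.eval_eq hS]; exact (hG.rewrite hR h₁).reduces_num hC
  · rw [h₂.eval_eq hS]; exact (hG.rewrite hR h₂).reduces_num hC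

/-! ### Systems computing primitive recursive functions -/

/-- A rewriting system with an interpretation in the natural numbers that it computes. -/
structure Sys where
  /-- the signature -/
  sig : List (ℕ × ℕ)
  /-- the rules -/
  R : List (Term × Term)
  /-- the operation denoted by each symbol -/
  I : ℕ → List ℕ → ℕ
  wf : WFTRS sig R
  sound : Sound R I
  complete : Complete sig R I
  zero_mem : (0, 0) ∈ sig
  succ_mem : (1, 1) ∈ sig
  I_zero : I 0 [] = 0
  I_succ : ∀ x, I 1 [x] = x + 1

/-- `S'` has all symbols of `S`, with the same meaning. -/
def Sys.Ext (S S' : Sys) : Prop := (∀ p ∈ S.sig, p ∈ S'.sig) ∧ Agree S.sig S.I S'.I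

theorem Sys.Ext.trans {S S' S'' : Sys} (h : S.Ext S') (h' : S'.Ext S'') : S.Ext S'' :=
  ⟨fun p hp => h'.1 p (h.1 p hp), fun p hp => (h'.2 p (h.1 p hp)).trans (h.2 p hp)⟩

/-- The symbol `c` denotes `f`. -/
def Sys.Denotes (S : Sys) (c : ℕ) {n : ℕ} (f : List.Vector ℕ n → ℕ) : Prop :=
  (c, n) ∈ S.sig ∧ ∀ v : List.Vector ℕ n, S.I c v.toList = f v

theorem Sys.Ext.denotes {S S' : Sys} (h : S.Ext S') {c n : ℕ} {f : List.Vector ℕ n → ℕ}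
    (hc : S.Denotes c f) : S'.Denotes c f :=
  ⟨h.1 _ hc.1, fun v => by rw [h.2 _ hc.1]; exact hc.2 v⟩

theorem WFTerm.mono {sig sig' : List (ℕ × ℕ)} (h : ∀ p ∈ sig, p ∈ sig') {t : Term}
    (ht : WFTerm sig t) : WFTerm sig' t := by
  induction ht with
  | var n => exact .var n
  | app hf _ ih => exact .app (h _ hf) ih

theorem exists_fresh (sig : List (ℕ × ℕ)) : ∃ c, ∀ p ∈ sig, p.1 ≠ c := by
  obtain ⟨c, hc⟩ := Infinite.exists_notMem_finset (sig.map Prod.fst).toFinset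
  refine ⟨c, fun p hp he => hc ?_⟩
  simp only [List.mem_toFinset, List.mem_map]
  exact ⟨p, hp, he⟩

theorem WFTRS.cons {sig : List (ℕ × ℕ)} {R Q : List (Term × Term)} {c k : ℕ} (h : WFTRS sig R)
    (hc : ∀ p ∈ sig, p.1 ≠ c)
    (hQ : ∀ p ∈ Q, WFTerm ((c, k) :: sig) p.1 ∧ WFTerm ((c, k) :: sig) p.2 ∧
      (∀ n, p.1 ≠ .var n) ∧ ∀ n ∈ p.2.vars, n ∈ p.1.vars) : WFTRS ((c, k) :: sig) (Q ++ R) := by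
  refine ⟨?_, ?_⟩
  · intro p hp q hq he
    rcases List.mem_cons.1 hp with rfl | hp <;> rcases List.mem_cons.1 hq with rfl | hq
    · rfl
    · exact absurd he.symm (hc q hq)
    · exact absurd he (hc p hp)
    · exact h.1 p hp q hq he
  · intro p hp
    rcases List.mem_append.1 hp with hp | hp
    · obtain ⟨h1, h2, h3, h4⟩ := hQ p hp
      exact ⟨h1, h2, h3, fun n hn => mem_vars.1 (h4 n (mem_vars.2 hn))⟩
    · obtain ⟨h1, h2, h3⟩ := h.2 p hp
      exact ⟨h1.mono fun _ => List.mem_cons_of_mem _, h2.mono fun _ => List.mem_cons_of_mem _, h3⟩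

theorem Sound.agree {sig : List (ℕ × ℕ)} {R : List (Term × Term)} {I J : ℕ → List ℕ → ℕ}
    (hR : WFTRS sig R) (h : Sound R I) (hJ : Agree sig I J) : Sound R J := fun p hp ρ => by
  rw [eval_agree hJ ρ (hR.2 p hp).1, eval_agree hJ ρ (hR.2 p hp).2.1, h p hp]

/-- Adding a fresh symbol for `f`, with rules that are valid and compute `f`. Validity
is required in every interpretation that extends the one of `S` and gives `c` the value `f`. -/
theorem Sys.add (S : Sys) {c k : ℕ} (hc : ∀ p ∈ S.sig, p.1 ≠ c) (f : List.Vector ℕ k → ℕ)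
    (Q : List (Term × Term))
    (hQ : ∀ p ∈ Q, WFTerm ((c, k) :: S.sig) p.1 ∧ WFTerm ((c, k) :: S.sig) p.2 ∧
      (∀ n, p.1 ≠ .var n) ∧ ∀ n ∈ p.2.vars, n ∈ p.1.vars)
    (hS : ∀ J, Agree S.sig S.I J → (∀ v : List.Vector ℕ k, J c v.toList = f v) → Sound Q J)
    (hC : (∀ p ∈ S.sig, ∀ xs : List ℕ, xs.length = p.2 →
        Reduces (Q ++ S.R) (.app p.1 (xs.map num)) (num (S.I p.1 xs))) →
      ∀ v : List.Vector ℕ k, Reduces (Q ++ S.R) (.app c (v.toList.map num)) (num (f v))) :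
    ∃ S', S.Ext S' ∧ S'.Denotes c f := by
  let J : ℕ → List ℕ → ℕ := Function.update S.I c
    fun l => if h : l.length = k then f ⟨l, h⟩ else 0
  have hJ : Agree S.sig S.I J := fun p hp => Function.update_of_ne (hc p hp) _ _
  have hJc : ∀ v : List.Vector ℕ k, J c v.toList = f v := by
    rintro ⟨l, rfl⟩
    simp [J]
  have hold : ∀ p ∈ S.sig, ∀ xs : List ℕ, xs.length = p.2 →
      Reduces (Q ++ S.R) (.app p.1 (xs.map num)) (num (S.I p.1 xs)) := fun p hp xs hx =>
    (S.complete p hp xs hx).mono fun _ h => List.mem_append_right _ h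
  refine ⟨⟨(c, k) :: S.sig, Q ++ S.R, J, S.wf.cons hc hQ, ?_, ?_, by simp [S.zero_mem],
    by simp [S.succ_mem], by rw [hJ _ S.zero_mem, S.I_zero],
    fun x => by rw [hJ _ S.succ_mem, S.I_succ]⟩, ⟨fun p hp => by simp [hp], hJ⟩, by simp, hJc⟩
  · intro p hp
    rcases List.mem_append.1 hp with hp | hp
    · exact hS J hJ hJc p hp
    · exact S.sound.agree S.wf hJ p hp
  · intro p hp xs hx
    rcases List.mem_cons.1 hp with rfl | hp
    · obtain ⟨v, rfl⟩ : ∃ v : List.Vector ℕ k, v.toList = xs := ⟨⟨xs, hx⟩, rfl⟩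
      have := hC hold v
      rw [← hJc] at this
      exact this
    · rw [hJ p hp]; exact hold p hp xs hx

/-- The variables `1, …, n`. -/
def vs (n : ℕ) : List Term := (List.range n).map fun i => .var (i + 1)

/-- The substitution sending the variable `0` to `y` and the variables `1, 2, …` to `ts`. -/
def sb (y : Term) (ts : List Term) (i : ℕ) : Term := (y :: ts).getD i (.var 0)

theorem length_vs (n : ℕ) : (vs n).length = n := by simp [vs]

theorem map_subst_vs (y : Term) (ts : List Term) {n : ℕ} (h : ts.length = n) :
    (vs n).map (Term.subst (sb y ts)) = ts := by
  subst h
  apply List.ext_getElem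
  · simp [vs]
  · intro i h1 h2
    simp [vs, sb, h2]

theorem wf_vs {sig : List (ℕ × ℕ)} {n : ℕ} : ∀ t ∈ vs n, WFTerm sig t := by
  intro t ht
  obtain ⟨i, -, rfl⟩ := List.mem_map.1 ht
  exact .var _

theorem exists_vec (I : ℕ → List ℕ → ℕ) (ρ : ℕ → ℕ) (n : ℕ) :
    ∃ v : List.Vector ℕ n, (vs n).map (eval I ρ) = v.toList :=
  ⟨⟨(vs n).map (eval I ρ), by simp [vs]⟩, rfl⟩

theorem vars_vs_sub {ts : List Term} {n : ℕ} (h : ∀ t ∈ ts, ∀ m ∈ t.vars, m ∈ ((vs n).map vars).flatten)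
    (m : ℕ) (hm : m ∈ (ts.map vars).flatten) : m ∈ ((vs n).map vars).flatten := by
  simp only [List.mem_flatten, List.mem_map, exists_exists_and_eq_and] at hm
  obtain ⟨t, ht, hm⟩ := hm
  exact h t ht m hm

/-- The base system: numerals and no rules. -/
def baseSys : Sys where
  sig := [(0, 0), (1, 1)]
  R := []
  I f xs := if f = 0 then 0 else xs.headI + 1
  wf := ⟨by simp [WFSig], by simp⟩
  sound := by simp [Sound]
  complete := by
    intro p hp xs hx
    simp only [List.mem_cons, List.not_mem_nil, or_false] at hp
    rcases hp with rfl | rfl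
    · obtain rfl := List.length_eq_zero_iff.1 hx
      exact .refl
    · obtain ⟨x, rfl⟩ := List.length_eq_one_iff.1 hx
      exact .refl
  zero_mem := by simp
  succ_mem := by simp
  I_zero := by simp
  I_succ x := by simp

/-- Finitely many functions can be denoted simultaneously, adding them one at a time. -/
theorem Sys.denotes_family {m : ℕ} {n : ℕ} (g : Fin n → List.Vector ℕ m → ℕ)
    (ih : ∀ i, ∀ S : Sys, ∃ S', S.Ext S' ∧ ∃ c, S'.Denotes c (g i)) (S : Sys) :
    ∃ S', S.Ext S' ∧ ∃ c : Fin n → ℕ, ∀ i, S'.Denotes (c i) (g i) := by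
  induction n generalizing S with
  | zero => exact ⟨S, ⟨fun _ h => h, fun _ _ => rfl⟩, Fin.elim0, fun i => i.elim0⟩
  | succ n ihn =>
    obtain ⟨S₁, h₁, c, hc⟩ := ihn (fun i => g i.succ) (fun i => ih i.succ) S
    obtain ⟨S₂, h₂, d, hd⟩ := ih 0 S₁
    refine ⟨S₂, h₁.trans h₂, Fin.cons d c, fun i => ?_⟩
    induction i using Fin.cases with
    | zero => exact hd
    | succ i => exact h₂.denotes (hc i)

/-- Projections: the rule `c(x₁, …, xₙ) → xᵢ`. -/
theorem Sys.add_get (S : Sys) {n : ℕ} (i : Fin n) :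
    ∃ S', S.Ext S' ∧ ∃ c, S'.Denotes c fun v : List.Vector ℕ n => v.get i := by
  obtain ⟨c, hc⟩ := exists_fresh S.sig
  have hi : ∀ (y : Term) (ts : List Term) (h : ts.length = n), sb y ts (i + 1) = ts[i] := by
    intro y ts h
    simp [sb, h]
  suffices H : ∃ S', S.Ext S' ∧ S'.Denotes c (fun v : List.Vector ℕ n => v.get i) by
    obtain ⟨S', h, h'⟩ := H
    exact ⟨S', h, c, h'⟩
  refine S.add hc _
    [(.app c (vs n), .var (i + 1))] ?_ ?_ ?_
  · simp only [List.mem_singleton, forall_eq]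
    refine ⟨.app (by simp [length_vs]) wf_vs, .var _, by simp, ?_⟩
    simp only [vars_var, List.mem_singleton, forall_eq, vars_app, List.mem_flatten, List.mem_map,
      exists_exists_and_eq_and]
    exact ⟨.var (i + 1), by simp [vs], by simp⟩
  · intro J _ hJ p hp ρ
    rw [List.mem_singleton] at hp
    subst hp
    obtain ⟨v, hv⟩ := exists_vec J ρ n
    simp only [eval_app, eval_var]
    rw [hv, hJ, List.Vector.get_eq_get_toList, List.get_eq_getElem]
    simp only [← hv]
    simp [vs]
  · intro _ v
    refine Reduces.rule (l := .app c (vs n)) (r := .var (i + 1)) (by simp)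
      (sb (.var 0) (v.toList.map num)) ?_ ?_
    · rw [subst_app, map_subst_vs _ _ (by simp)]
    · rw [subst_var, hi _ _ (by simp)]
      simp [List.Vector.get_eq_get_toList]

/-- Composition: the rule `c(x) → f(g₁(x), …, gₙ(x))`. -/
theorem Sys.add_comp (S : Sys) {m n : ℕ} {f : List.Vector ℕ n → ℕ}
    {g : Fin n → List.Vector ℕ m → ℕ} {cf : ℕ} {cg : Fin n → ℕ} (hf : S.Denotes cf f)
    (hg : ∀ i, S.Denotes (cg i) (g i)) :
    ∃ S', S.Ext S' ∧ ∃ c, S'.Denotes c fun v => f (List.Vector.ofFn fun i => g i v) := by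
  obtain ⟨c, hc⟩ := exists_fresh S.sig
  suffices H : ∃ S', S.Ext S' ∧ S'.Denotes c (fun v => f (List.Vector.ofFn fun i => g i v)) by
    obtain ⟨S', h, h'⟩ := H
    exact ⟨S', h, c, h'⟩
  refine S.add hc _
    [(.app c (vs m), .app cf (List.ofFn fun i => .app (cg i) (vs m)))] ?_ ?_ ?_
  · simp only [List.mem_singleton, forall_eq]
    refine ⟨.app (by simp [length_vs]) wf_vs, .app (by simp [hf.1]) ?_, by simp, ?_⟩
    · simp only [List.mem_ofFn, forall_exists_index, forall_apply_eq_imp_iff]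
      exact fun i => .app (by simp [length_vs, (hg i).1]) wf_vs
    · simp only [vars_app]
      refine vars_vs_sub ?_
      simp only [List.mem_ofFn, forall_exists_index, forall_apply_eq_imp_iff, vars_app]
      exact fun i m hm => hm
  · intro J hJ hJc p hp ρ
    rw [List.mem_singleton] at hp
    subst hp
    obtain ⟨v, hv⟩ := exists_vec J ρ m
    simp only [eval_app, List.map_ofFn, Function.comp_def]
    rw [hv, hJc, hJ _ hf.1, ← hf.2, List.Vector.toList_ofFn]
    congr 2
    funext i
    rw [hJ _ (hg i).1, (hg i).2]
  · intro hold v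
    refine (Reduces.rule (l := .app c (vs m))
      (r := .app cf (List.ofFn fun i => .app (cg i) (vs m))) (by simp) (sb (.var 0) (v.toList.map num))
      (by rw [subst_app, map_subst_vs _ _ (by simp)]) rfl).trans ?_
    simp only [subst_app, List.map_ofFn, Function.comp_def, map_subst_vs (.var 0) (v.toList.map num)
      (n := m) (by simp)]
    have hlast := hold _ hf.1 (List.Vector.ofFn fun i => g i v).toList (by simp)
    rw [hf.2] at hlast
    refine Relation.ReflTransGen.trans (Reduces.args cf ?_) hlast
    rw [List.Vector.toList_ofFn, List.map_ofFn, List.forall₂_iff_get]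
    refine ⟨by simp, fun i h1 h2 => ?_⟩
    have hi : i < n := by simpa using h1
    have := hold _ (hg ⟨i, hi⟩).1 v.toList (by simp)
    rw [(hg ⟨i, hi⟩).2] at this
    simpa using this

/-- Primitive recursion: the rules `c(0, x) → f(x)` and `c(S y, x) → g(y, c(y, x), x)`. -/
theorem Sys.add_prec (S : Sys) {n : ℕ} {f : List.Vector ℕ n → ℕ} {g : List.Vector ℕ (n + 2) → ℕ}
    {cf cg : ℕ} (hf : S.Denotes cf f) (hg : S.Denotes cg g) :
    ∃ S', S.Ext S' ∧ ∃ c, S'.Denotes c fun v : List.Vector ℕ (n + 1) =>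
      (v.head.rec (f v.tail) fun y IH => g (y ::ᵥ IH ::ᵥ v.tail) : ℕ) := by
  obtain ⟨c, hc⟩ := exists_fresh S.sig
  suffices H : ∃ S', S.Ext S' ∧ S'.Denotes c (fun v : List.Vector ℕ (n + 1) =>
      (v.head.rec (f v.tail) fun y IH => g (y ::ᵥ IH ::ᵥ v.tail) : ℕ)) by
    obtain ⟨S', h, h'⟩ := H
    exact ⟨S', h, c, h'⟩
  refine S.add hc _
    [(.app c (.app 0 [] :: vs n), .app cf (vs n)),
     (.app c (.app 1 [.var 0] :: vs n), .app cg (.var 0 :: .app c (.var 0 :: vs n) :: vs n))]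
    ?_ ?_ ?_
  · have h0 : WFTerm ((c, n + 1) :: S.sig) (.app 0 []) :=
      .app (by simp [S.zero_mem]) (by simp)
    have h1 : WFTerm ((c, n + 1) :: S.sig) (.app 1 [.var 0]) :=
      .app (by simp [S.succ_mem]) (by simp [WFTerm.var])
    have h2 : WFTerm ((c, n + 1) :: S.sig) (.app c (.var 0 :: vs n)) :=
      .app (by simp [length_vs]) (List.forall_mem_cons.2 ⟨.var _, wf_vs⟩)
    simp only [List.mem_cons, List.not_mem_nil, or_false, forall_eq_or_imp, forall_eq]
    refine ⟨⟨.app (by simp [length_vs]) ?_, .app (by simp [length_vs, hf.1]) wf_vs, by simp, ?_⟩,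
      ⟨.app (by simp [length_vs]) ?_, .app (by simp [length_vs, hg.1]) ?_, by simp, ?_⟩⟩
    · exact List.forall_mem_cons.2 ⟨h0, wf_vs⟩
    · simp
    · exact List.forall_mem_cons.2 ⟨h1, wf_vs⟩
    · exact List.forall_mem_cons.2 ⟨.var _, List.forall_mem_cons.2 ⟨h2, wf_vs⟩⟩
    · intro k hk
      simp only [vars_app, List.map_cons, List.flatten_cons, List.mem_append, vars_var,
        List.map_nil, List.flatten_nil, List.append_nil] at hk ⊢
      tauto
  · intro J hJ hJc p hp ρ
    obtain ⟨v, hv⟩ := exists_vec J ρ n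
    have hJ' : ∀ x, J c (x :: v.toList) =
        (x.rec (f v) fun y IH => g (y ::ᵥ IH ::ᵥ v) : ℕ) := fun x => by
      have := hJc (x ::ᵥ v)
      simpa using this
    simp only [List.mem_cons, List.not_mem_nil, or_false] at hp
    rcases hp with rfl | rfl
    · simp only [eval_app, List.map_cons, List.map_nil, hv]
      rw [hJ _ S.zero_mem, S.I_zero, hJ _ hf.1, hf.2]
      exact hJ' 0
    · simp only [eval_app, List.map_cons, List.map_nil, eval_var, hv]
      rw [hJ _ S.succ_mem, S.I_succ, hJ', hJ', hJ _ hg.1]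
      have := hg.2 (ρ 0 ::ᵥ ((ρ 0).rec (f v) fun y IH => g (y ::ᵥ IH ::ᵥ v) : ℕ) ::ᵥ v)
      simpa using this.symm
  · intro hold v
    obtain ⟨x, v, rfl⟩ : ∃ x w, v = x ::ᵥ w :=
      ⟨v.head, v.tail, (List.Vector.cons_head_tail v).symm⟩
    simp only [List.Vector.head_cons, List.Vector.tail_cons, List.Vector.toList_cons, List.map_cons]
    have hvs : ∀ y, (vs n).map (Term.subst (sb y (v.toList.map num))) = v.toList.map num :=
      fun y => map_subst_vs _ _ (by simp)
    induction x with
    | zero =>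
      have := hold _ hf.1 v.toList (by simp)
      rw [hf.2] at this
      refine Relation.ReflTransGen.trans ?_ this
      exact Reduces.rule (l := .app c (.app 0 [] :: vs n)) (r := .app cf (vs n)) (by simp)
        (sb (.var 0) (v.toList.map num)) (by simp [hvs, num]) (by simp [hvs])
    | succ x ih =>
      set IH : ℕ := x.rec (f v) fun y IH => g (y ::ᵥ IH ::ᵥ v) with hIH
      have hlast := hold _ hg.1 (x ::ᵥ IH ::ᵥ v).toList (by simp)
      rw [hg.2] at hlast
      refine Relation.ReflTransGen.trans ?_ hlast
      refine Relation.ReflTransGen.trans (Reduces.rule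
        (l := .app c (.app 1 [.var 0] :: vs n))
        (r := .app cg (.var 0 :: .app c (.var 0 :: vs n) :: vs n)) (by simp)
        (sb (num x) (v.toList.map num)) (t := .app cg
          (num x :: .app c (num x :: v.toList.map num) :: v.toList.map num))
        (by simp [hvs, num, sb]) (by simp [hvs, sb])) ?_
      have := Reduces.congr cg [num x] (v.toList.map num) ih
      simpa [Reduces] using this

/-- Every primitive recursive function is denoted by a symbol of some system. -/
theorem Sys.exists_denotes {n : ℕ} {f : List.Vector ℕ n → ℕ} (hf : Nat.Primrec' f) (S : Sys) :
    ∃ S', S.Ext S' ∧ ∃ c, S'.Denotes c f := by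
  induction hf generalizing S with
  | zero =>
    refine ⟨S, ⟨fun _ h => h, fun _ _ => rfl⟩, 0, S.zero_mem, fun v => ?_⟩
    rw [v.eq_nil]; exact S.I_zero
  | succ =>
    refine ⟨S, ⟨fun _ h => h, fun _ _ => rfl⟩, 1, S.succ_mem, fun v => ?_⟩
    obtain ⟨x, w, rfl⟩ : ∃ x w, v = x ::ᵥ w :=
      ⟨v.head, v.tail, (List.Vector.cons_head_tail v).symm⟩
    rw [w.eq_nil]; exact S.I_succ x
  | get i => exact S.add_get i
  | comp g _ _ ihf ihg =>
    obtain ⟨S₁, h₁, cf, hf⟩ := ihf S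
    obtain ⟨S₂, h₂, cg, hg⟩ := Sys.denotes_family g (fun i S => ihg i S) S₁
    obtain ⟨S₃, h₃, h⟩ := S₂.add_comp (h₂.denotes hf) hg
    exact ⟨S₃, (h₁.trans h₂).trans h₃, h⟩
  | prec _ _ ihf ihg =>
    obtain ⟨S₁, h₁, cf, hf⟩ := ihf S
    obtain ⟨S₂, h₂, cg, hg⟩ := ihg S₁
    obtain ⟨S₃, h₃, h⟩ := S₂.add_prec (h₂.denotes hf) hg
    exact ⟨S₃, (h₁.trans h₂).trans h₃, h⟩

/-! ### Reducing a `Π⁰₂` set to weak ground confluence -/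

theorem computable_uncurry {p : ℕ × ℕ × ℕ → Bool} (hp : Computable p) :
    Computable fun z : ℕ × ℕ => p (z.1.unpair.1, z.1.unpair.2, z.2) := by
  have h : Primrec fun z : ℕ × ℕ => z.1.unpair := Primrec.unpair.comp .fst
  have h2 : Primrec fun z : ℕ × ℕ => (z.1.unpair.1, z.1.unpair.2, z.2) :=
    (Primrec.fst.comp h).pair ((Primrec.snd.comp h).pair .snd)
  exact hp.comp h2.to_comp

theorem rfind_mem_iff {p : ℕ → Bool} :
    (∃ z, z ∈ Nat.rfind fun y => Part.some (p y)) ↔ ∃ y, p y = true := by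
  rw [← Part.dom_iff_mem]
  refine Nat.rfind_dom.trans ?_
  simp

/-- Some code halts on `(n, x)` iff `p n x y` holds for some `y`: unbounded search for `y`. -/
theorem exists_code_search {p : ℕ → ℕ → ℕ → Bool}
    (hp : Computable fun x : ℕ × ℕ × ℕ => p x.1 x.2.1 x.2.2) :
    ∃ c : Nat.Partrec.Code, ∀ n x, (∃ z, z ∈ c.eval (Nat.pair n x)) ↔ ∃ y, p n x y = true := by
  have hc : Computable₂ fun (a : ℕ) (y : ℕ) => p a.unpair.1 a.unpair.2 y := computable_uncurry hp
  obtain ⟨c, hc⟩ := Nat.Partrec.Code.exists_code.1 (Partrec.nat_iff.1 (Partrec.rfind hc.partrec₂))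
  refine ⟨c, fun n x => ?_⟩
  rw [hc]
  refine rfind_mem_iff.trans ?_
  simp

/-- The bounded run of a code, with the step bound as third argument. -/
def stage (c : Nat.Partrec.Code) (v : List.Vector ℕ 3) : ℕ :=
  if (Nat.Partrec.Code.evaln (v.get 2) c (Nat.pair (v.get 0) (v.get 1))).isSome = true then 1 else 0

theorem primrec_stage (c : Nat.Partrec.Code) : Nat.Primrec' (stage c) := by
  rw [Nat.Primrec'.prim_iff]
  have hg : ∀ i : Fin 3, Primrec fun v : List.Vector ℕ 3 => v.get i :=
    fun i => Primrec.vector_get.comp .id (.const i)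
  have he : Primrec fun v : List.Vector ℕ 3 =>
      Nat.Partrec.Code.evaln (v.get 2) c (Nat.pair (v.get 0) (v.get 1)) :=
    Nat.Partrec.Code.primrec_evaln.comp (((hg 2).pair (.const c)).pair
      (Primrec₂.natPair.comp (hg 0) (hg 1)))
  exact Primrec.ite (Primrec.eq.comp (Primrec.option_isSome.comp he) (.const true))
    (.const 1) (.const 0)

theorem stage_ne_zero (c : Nat.Partrec.Code) (n x k : ℕ) :
    stage c (n ::ᵥ x ::ᵥ k ::ᵥ .nil) ≠ 0 ↔
      ∃ z, z ∈ Nat.Partrec.Code.evaln k c (Nat.pair n x) := by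
  have : stage c (n ::ᵥ x ::ᵥ k ::ᵥ .nil) =
      if (Nat.Partrec.Code.evaln k c (Nat.pair n x)).isSome = true then 1 else 0 := rfl
  rw [this]
  generalize Nat.Partrec.Code.evaln k c (Nat.pair n x) = o
  cases o <;> simp

/-- A `∀∃` matrix can be replaced by a primitive recursive one that is monotone in the bound. -/
theorem exists_stage {p : ℕ → ℕ → ℕ → Bool}
    (hp : Computable fun x : ℕ × ℕ × ℕ => p x.1 x.2.1 x.2.2) :
    ∃ f : List.Vector ℕ 3 → ℕ, Nat.Primrec' f ∧
      (∀ n x k k', k ≤ k' → f (n ::ᵥ x ::ᵥ k ::ᵥ .nil) ≠ 0 → f (n ::ᵥ x ::ᵥ k' ::ᵥ .nil) ≠ 0) ∧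
      ∀ n x, (∃ k, f (n ::ᵥ x ::ᵥ k ::ᵥ .nil) ≠ 0) ↔ ∃ y, p n x y = true := by
  obtain ⟨c, hdom⟩ := exists_code_search hp
  refine ⟨stage c, primrec_stage c, ?_, ?_⟩
  · intro n x k k' hk
    rw [stage_ne_zero, stage_ne_zero]
    exact fun ⟨z, hz⟩ => ⟨z, Nat.Partrec.Code.evaln_mono hk hz⟩
  · intro n x
    rw [← hdom]
    simp only [stage_ne_zero]
    exact ⟨fun ⟨k, z, hz⟩ => ⟨z, Nat.Partrec.Code.evaln_sound hz⟩,
      fun ⟨z, hz⟩ => (Nat.Partrec.Code.evaln_complete.1 hz).imp fun k hk => ⟨z, hk⟩⟩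

/-- The rules of the search for input `n`: `g x → 0`, `g x → q 0 x 0`, `q (S z) x y → 0` and
`q 0 x y → q (P n x y) x (S y)`. -/
def searchRules (P g q n : ℕ) : List (Term × Term) :=
  [(.app g [.var 0], .app 0 []),
   (.app g [.var 0], .app q [.app 0 [], .var 0, .app 0 []]),
   (.app q [.app 1 [.var 2], .var 0, .var 1], .app 0 []),
   (.app q [.app 0 [], .var 0, .var 1],
     .app q [.app P [num n, .var 0, .var 1], .var 0, .app 1 [.var 1]])]

/-- The interpretation of the enlarged signature: both new symbols denote `0`. -/
def searchI (S : Sys) (g q : ℕ) (f : ℕ) (xs : List ℕ) : ℕ :=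
  if f = g ∨ f = q then 0 else S.I f xs

theorem wf_num {sig : List (ℕ × ℕ)} (h0 : (0, 0) ∈ sig) (h1 : (1, 1) ∈ sig) (n : ℕ) :
    WFTerm sig (num n) := by
  induction n with
  | zero => exact .app h0 (by simp)
  | succ n ih => exact .app h1 (by simpa using ih)

theorem vars_num (n : ℕ) : (num n).vars = [] := by
  induction n with
  | zero => simp [num]
  | succ n ih => simp [num, ih]

theorem eval_num {I : ℕ → List ℕ → ℕ} (h0 : I 0 [] = 0) (h1 : ∀ x, I 1 [x] = x + 1) (ρ : ℕ → ℕ)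
    (n : ℕ) : (num n).eval I ρ = n := by
  induction n with
  | zero => simp [num, h0]
  | succ n ih => simp [num, ih, h1]

/-- A step from `f(ts)` is a root step or a step in one argument. -/
theorem Rewrite.app_inv {R : List (Term × Term)} {f : ℕ} {ts : List Term} {t' : Term}
    (h : Rewrite R (.app f ts) t') :
    (∃ l r σ, (l, r) ∈ R ∧ l.subst σ = .app f ts ∧ r.subst σ = t') ∨
    ∃ ts₁ ts₂ s s', ts = ts₁ ++ s :: ts₂ ∧ Rewrite R s s' ∧ t' = .app f (ts₁ ++ s' :: ts₂) := by
  generalize hs : Term.app f ts = s at h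
  cases h with
  | rule l r σ h => exact .inl ⟨l, r, σ, h, rfl, rfl⟩
  | congr f' ts₁ ts₂ t t' h =>
    obtain ⟨rfl, rfl⟩ := Term.app.inj hs
    exact .inr ⟨ts₁, ts₂, t, t', rfl, h, rfl⟩

section
variable {S : Sys} {P g q : ℕ} {f : List.Vector ℕ 3 → ℕ}

theorem agree_searchI (hg : ∀ p ∈ S.sig, p.1 ≠ g) (hq : ∀ p ∈ S.sig, p.1 ≠ q) :
    Agree S.sig S.I (searchI S g q) := fun p hp => by
  funext xs
  simp [searchI, hg p hp, hq p hp]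

theorem wf_search (hP : S.Denotes P f) (hg : ∀ p ∈ S.sig, p.1 ≠ g)
    (hq : ∀ p ∈ (g, 1) :: S.sig, p.1 ≠ q) (n : ℕ) :
    WFTRS ((q, 3) :: (g, 1) :: S.sig) (searchRules P g q n ++ S.R) := by
  have h := S.wf.cons (Q := []) (k := 1) hg (by simp)
  refine h.cons hq ?_
  have hsig : ∀ p ∈ S.sig, p ∈ (q, 3) :: (g, 1) :: S.sig := fun p hp => by simp [hp]
  have w0 : WFTerm ((q, 3) :: (g, 1) :: S.sig) (.app 0 []) :=
    .app (hsig _ S.zero_mem) (by simp)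
  have w1 : ∀ i, WFTerm ((q, 3) :: (g, 1) :: S.sig) (.app 1 [.var i]) := fun i =>
    .app (hsig _ S.succ_mem) (by simp [WFTerm.var])
  have wg : WFTerm ((q, 3) :: (g, 1) :: S.sig) (.app g [.var 0]) :=
    .app (by simp) (by simp [WFTerm.var])
  have wq : ∀ {a b c}, WFTerm ((q, 3) :: (g, 1) :: S.sig) a →
      WFTerm ((q, 3) :: (g, 1) :: S.sig) b → WFTerm ((q, 3) :: (g, 1) :: S.sig) c →
      WFTerm ((q, 3) :: (g, 1) :: S.sig) (.app q [a, b, c]) := fun ha hb hc =>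
    .app (by simp) (by simp [ha, hb, hc])
  have wP : WFTerm ((q, 3) :: (g, 1) :: S.sig) (.app P [num n, .var 0, .var 1]) :=
    .app (hsig _ hP.1) (by
      simp [WFTerm.var, wf_num (hsig _ S.zero_mem) (hsig _ S.succ_mem)])
  simp only [searchRules, List.mem_cons, List.not_mem_nil, or_false, forall_eq_or_imp, forall_eq]
  refine ⟨⟨wg, w0, by simp, by simp⟩, ⟨wg, wq w0 (.var _) w0, by simp, by simp⟩,
    ⟨wq (w1 _) (.var _) (.var _), w0, by simp, by simp⟩,
    ⟨wq w0 (.var _) (.var _), wq wP (.var _) (w1 _), by simp, by simp [vars_num]⟩⟩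

theorem sound_search (hg : ∀ p ∈ S.sig, p.1 ≠ g) (hq : ∀ p ∈ S.sig, p.1 ≠ q) (n : ℕ) :
    Sound (searchRules P g q n ++ S.R) (searchI S g q) := by
  intro p hp ρ
  rcases List.mem_append.1 hp with hp | hp
  · have h0 : searchI S g q 0 [] = 0 := by
      rw [agree_searchI hg hq _ S.zero_mem, S.I_zero]
    have hgI : ∀ xs, searchI S g q g xs = 0 := fun xs => by simp [searchI]
    have hqI : ∀ xs, searchI S g q q xs = 0 := fun xs => by simp [searchI]
    simp only [searchRules, List.mem_cons, List.not_mem_nil, or_false] at hp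
    rcases hp with rfl | rfl | rfl | rfl <;> simp [h0, hgI, hqI]
  · exact S.sound.agree S.wf (agree_searchI hg hq) p hp ρ

/-- If every search succeeds, then the two new symbols are computed as well. -/
theorem complete_search (hP : S.Denotes P f) (hg : ∀ p ∈ S.sig, p.1 ≠ g)
    (hq : ∀ p ∈ S.sig, p.1 ≠ q) {n : ℕ}
    (hmono : ∀ x k k', k ≤ k' →
      f (n ::ᵥ x ::ᵥ k ::ᵥ .nil) ≠ 0 → f (n ::ᵥ x ::ᵥ k' ::ᵥ .nil) ≠ 0)
    (hf : ∀ x, ∃ k, f (n ::ᵥ x ::ᵥ k ::ᵥ .nil) ≠ 0) :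
    Complete ((q, 3) :: (g, 1) :: S.sig) (searchRules P g q n ++ S.R) (searchI S g q) := by
  have hold : ∀ p ∈ S.sig, ∀ xs : List ℕ, xs.length = p.2 →
      Reduces (searchRules P g q n ++ S.R) (.app p.1 (xs.map num)) (num (S.I p.1 xs)) :=
    fun p hp xs hx => (S.complete p hp xs hx).mono fun _ h => List.mem_append_right _ h
  have hsucc : ∀ z x y, Reduces (searchRules P g q n ++ S.R)
      (.app q [num (z + 1), num x, num y]) (num 0) := fun z x y =>
    Reduces.rule (l := .app q [.app 1 [.var 2], .var 0, .var 1]) (r := .app 0 [])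
      (by simp [searchRules]) (fun i => [num x, num y, num z].getD i (.var 0))
      (by simp [num]) (by simp [num])
  -- Induction on the distance `j` to a successful stage; monotonicity supplies such a `j`.
  have hzero : ∀ x j y, f (n ::ᵥ x ::ᵥ (y + j) ::ᵥ .nil) ≠ 0 →
      Reduces (searchRules P g q n ++ S.R) (.app q [num 0, num x, num y]) (num 0) := by
    intro x j
    induction j with
    | zero | succ j ih =>
      intro y hy
      have h1 : Reduces (searchRules P g q n ++ S.R) (.app q [num 0, num x, num y])
          (.app q [.app P [num n, num x, num y], num x, num (y + 1)]) :=
        Reduces.rule (l := .app q [.app 0 [], .var 0, .var 1])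
          (r := .app q [.app P [num n, .var 0, .var 1], .var 0, .app 1 [.var 1]])
          (by simp [searchRules]) (fun i => [num x, num y].getD i (.var 0))
          (by simp [num]) (by simp [num])
      have h2 := hold _ hP.1 [n, x, y] rfl
      rw [show S.I P [n, x, y] = f (n ::ᵥ x ::ᵥ y ::ᵥ .nil) from
        hP.2 (n ::ᵥ x ::ᵥ y ::ᵥ .nil)] at h2
      refine h1.trans ((Reduces.congr q [] [num x, num (y + 1)] h2).trans ?_)
      by_cases hy0 : f (n ::ᵥ x ::ᵥ y ::ᵥ .nil) = 0
      · first
        | exact absurd hy0 hy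
        | rw [hy0]
          exact ih (y + 1) (by rwa [show y + 1 + j = y + (j + 1) by omega])
      · obtain ⟨z, hz⟩ := Nat.exists_eq_succ_of_ne_zero hy0
        rw [hz]
        exact hsucc z x (y + 1)
  intro p hp xs hx
  rcases List.mem_cons.1 hp with rfl | hp
  · obtain ⟨u, x, y, rfl⟩ := List.length_eq_three.1 hx
    rw [show searchI S g q q [u, x, y] = 0 by simp [searchI]]
    cases u with
    | zero =>
      obtain ⟨k, hk⟩ := hf x
      exact hzero x k y (hmono x k _ (by omega) hk)
    | succ z => exact hsucc z x y
  rcases List.mem_cons.1 hp with rfl | hp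
  · obtain ⟨x, rfl⟩ := List.length_eq_one_iff.1 hx
    rw [show searchI S g q g [x] = 0 by simp [searchI]]
    exact Reduces.rule (l := .app g [.var 0]) (r := .app 0 [])
      (by simp [searchRules]) (fun _ => num x) (by simp) (by simp [num])
  · rw [agree_searchI hg hq p hp]
    exact hold p hp xs hx

/-- Ground terms over the old signature are rewritten by the old rules only. -/
theorem Rewrite.old (hg : ∀ p ∈ S.sig, p.1 ≠ g) (hq : ∀ p ∈ S.sig, p.1 ≠ q) {n : ℕ} {t t' : Term}
    (h : Rewrite (searchRules P g q n ++ S.R) t t') : GWF S.sig t → Rewrite S.R t t' := by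
  induction h with
  | rule l r σ h =>
    intro ht
    rcases List.mem_append.1 h with h | h
    · exfalso
      simp only [searchRules, List.mem_cons, List.not_mem_nil, or_false, Prod.mk.injEq] at h
      rcases h with ⟨rfl, -⟩ | ⟨rfl, -⟩ | ⟨rfl, -⟩ | ⟨rfl, -⟩ <;>
        rw [subst_app, gwf_app] at ht
      · exact hg _ ht.1 rfl
      · exact hg _ ht.1 rfl
      · exact hq _ ht.1 rfl
      · exact hq _ ht.1 rfl
    · exact .rule l r σ h
  | congr f ts₁ ts₂ t t' _ ih =>
    intro ht
    rw [gwf_app] at ht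
    exact .congr f ts₁ ts₂ t t' (ih (ht.2 t (by simp)))

/-- Terms `q u s w` where `u` has value `0` and `s` has value `x`. -/
def Searching (S : Sys) (g q x : ℕ) (t : Term) : Prop :=
  ∃ u s w, t = .app q [u, s, w] ∧ u.eval (searchI S g q) 0 = 0 ∧ s.eval (searchI S g q) 0 = x

/-- An unsuccessful search never leaves the set of its states. -/
theorem Searching.rewrite (hP : S.Denotes P f) (hg : ∀ p ∈ S.sig, p.1 ≠ g)
    (hq : ∀ p ∈ (g, 1) :: S.sig, p.1 ≠ q) {n x : ℕ}
    (hf : ∀ k, f (n ::ᵥ x ::ᵥ k ::ᵥ .nil) = 0) {t t' : Term} (ht : Searching S g q x t)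
    (h : Rewrite (searchRules P g q n ++ S.R) t t') : Searching S g q x t' := by
  have hq' : ∀ p ∈ S.sig, p.1 ≠ q := fun p hp => hq p (by simp [hp])
  have hJ := agree_searchI hg hq'
  have hS : Sound (searchRules P g q n ++ S.R) (searchI S g q) := sound_search hg hq' n
  obtain ⟨u, s, w, rfl, hu, hs⟩ := ht
  rcases h.app_inv with ⟨l, r, σ, hm, hl, rfl⟩ | ⟨ts₁, ts₂, a, a', he, ha, rfl⟩
  · rcases List.mem_append.1 hm with hm | hm
    · simp only [searchRules, List.mem_cons, List.not_mem_nil, or_false, Prod.mk.injEq] at hm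
      rcases hm with ⟨rfl, -⟩ | ⟨rfl, -⟩ | ⟨rfl, -⟩ | ⟨rfl, rfl⟩
      · rw [subst_app] at hl
        exact absurd (Term.app.inj hl).1 (hq (g, 1) (by simp))
      · rw [subst_app] at hl
        exact absurd (Term.app.inj hl).1 (hq (g, 1) (by simp))
      · simp only [subst_app, subst_var, List.map_cons, List.map_nil, Term.app.injEq,
          List.cons.injEq, true_and, and_true] at hl
        obtain ⟨rfl, -, -⟩ := hl
        rw [eval_app, hJ _ S.succ_mem, List.map_cons, List.map_nil, S.I_succ] at hu
        omega
      · simp only [subst_app, subst_var, List.map_cons, List.map_nil, Term.app.injEq,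
          List.cons.injEq, true_and, and_true] at hl
        obtain ⟨-, rfl, rfl⟩ := hl
        refine ⟨.app P [num n, σ 0, σ 1], σ 0, .app 1 [σ 1], by simp, ?_, hs⟩
        have hn := eval_num (I := searchI S g q) (by rw [hJ _ S.zero_mem, S.I_zero])
          (fun x => by rw [hJ _ S.succ_mem, S.I_succ]) 0 n
        simp only [eval_app, List.map_cons, List.map_nil, hs, hn]
        rw [hJ _ hP.1, ← hf ((σ 1).eval (searchI S g q) 0)]
        exact hP.2 (n ::ᵥ x ::ᵥ (σ 1).eval (searchI S g q) 0 ::ᵥ .nil)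
    · obtain ⟨hwf, -, hv, -⟩ := S.wf.2 _ hm
      exfalso
      cases hwf with
      | var m => exact hv m rfl
      | app h1 h2 =>
        rw [subst_app] at hl
        exact hq' _ h1 (Term.app.inj hl).1
  · have hev := ha.eval_eq hS 0
    rcases ts₁ with _ | ⟨b₁, _ | ⟨b₂, _ | ⟨b₃, ts₁⟩⟩⟩
    · simp only [List.nil_append, List.cons.injEq] at he
      obtain ⟨rfl, rfl⟩ := he
      exact ⟨a', s, w, rfl, hev ▸ hu, hs⟩
    · simp only [List.cons_append, List.nil_append, List.cons.injEq] at he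
      obtain ⟨rfl, rfl, rfl⟩ := he
      exact ⟨u, a', w, rfl, hu, hev ▸ hs⟩
    · simp only [List.cons_append, List.nil_append, List.cons.injEq] at he
      obtain ⟨rfl, rfl, rfl, rfl⟩ := he
      exact ⟨u, s, a', rfl, hu, hs⟩
    · simp at he

/-- The only peak that matters is `0 ← g x → q 0 x 0`. If every search succeeds, all ground terms
reduce to the numeral of their value. If the search for `x` fails, then `0` reaches only terms
over the old signature while `q 0 x 0` reaches only terms with root symbol `q`. -/
theorem wcr_search_iff (hP : S.Denotes P f) (hg : ∀ p ∈ S.sig, p.1 ≠ g)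
    (hq : ∀ p ∈ (g, 1) :: S.sig, p.1 ≠ q) {n : ℕ}
    (hmono : ∀ x k k', k ≤ k' →
      f (n ::ᵥ x ::ᵥ k ::ᵥ .nil) ≠ 0 → f (n ::ᵥ x ::ᵥ k' ::ᵥ .nil) ≠ 0) :
    (∀ x, ∃ k, f (n ::ᵥ x ::ᵥ k ::ᵥ .nil) ≠ 0) ↔
      Encodable.encode ((q, 3) :: (g, 1) :: S.sig, searchRules P g q n ++ S.R) ∈ GWCR := by
  have hq' : ∀ p ∈ S.sig, p.1 ≠ q := fun p hp => hq p (by simp [hp])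
  have hwf := wf_search hP hg hq n
  rw [code_mem_GWCR]
  constructor
  · intro hf
    exact ⟨hwf, wcr_of_complete hwf (sound_search hg hq' n) (complete_search hP hg hq' hmono hf)⟩
  · rintro ⟨-, h⟩
    by_contra! hx
    obtain ⟨x, hx⟩ := hx
    have hmem : ∀ p ∈ S.sig, p ∈ (q, 3) :: (g, 1) :: S.sig := fun p hp => by simp [hp]
    have hG : WFTerm ((q, 3) :: (g, 1) :: S.sig) (.app g [num x]) :=
      .app (by simp) (by simp [wf_num (hmem _ S.zero_mem) (hmem _ S.succ_mem)])
    obtain ⟨d, h₁, h₂⟩ := h (.app g [num x]) hG ((ground_iff _).2 (by simp [vars_num]))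
      (.app 0 []) (.app q [.app 0 [], num x, .app 0 []])
      (by
        have := Rewrite.rule (R := searchRules P g q n ++ S.R) (.app g [.var 0]) (.app 0 [])
          (fun _ => num x) (by simp [searchRules])
        simpa using this)
      (by
        have := Rewrite.rule (R := searchRules P g q n ++ S.R) (.app g [.var 0])
          (.app q [.app 0 [], .var 0, .app 0 []]) (fun _ => num x) (by simp [searchRules])
        simpa using this)
    have hd₁ : GWF S.sig d := by
      clear h₂
      induction h₁ with
      | refl => exact gwf_app.2 ⟨S.zero_mem, by simp⟩
      | tail _ hs ih => exact ih.rewrite S.wf (hs.old hg hq' ih)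
    have hd₂ : Searching S g q x d := by
      clear h₁ hd₁
      induction h₂ with
      | refl =>
        have hJ := agree_searchI hg hq'
        refine ⟨_, _, _, rfl, ?_, eval_num ?_ ?_ 0 x⟩
        · rw [eval_app, hJ _ S.zero_mem]; exact S.I_zero
        · rw [hJ _ S.zero_mem]; exact S.I_zero
        · intro y; rw [hJ _ S.succ_mem]; exact S.I_succ y
      | tail _ hs ih => exact ih.rewrite hP hg hq hx hs
    obtain ⟨u, s, w, rfl, -⟩ := hd₂
    exact hq' _ (gwf_app.1 hd₁).1 rfl

end

theorem primrec_num : Primrec num := by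
  refine (Primrec.nat_rec₁ (Term.app 0 []) (f := fun _ t => Term.app 1 [t])
    (primrec_app.comp (.const 1) (Primrec.list_cons.comp .snd (.const [])))).of_eq fun n => ?_
  induction n with
  | zero => rfl
  | succ n ih => simpa [num] using ih

theorem primrec_searchRules (P g q : ℕ) : Primrec (searchRules P g q) := by
  have hn : Primrec fun n => Term.app P [num n, .var 0, .var 1] :=
    primrec_app.comp (.const P) (Primrec.list_cons.comp primrec_num (.const _))
  have hr : Primrec fun n => Term.app q [.app P [num n, .var 0, .var 1], .var 0, .app 1 [.var 1]] :=
    primrec_app.comp (.const q) (Primrec.list_cons.comp hn (.const _))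
  exact Primrec.list_cons.comp (.const _) (Primrec.list_cons.comp (.const _)
    (Primrec.list_cons.comp (.const _) (Primrec.list_cons.comp ((Primrec.const _).pair hr)
      (.const []))))

/-- Every `Π⁰₂` set reduces to weak ground confluence. -/
theorem hard_GWCR (B : Set ℕ) (hB : Pi02 B) : ManyOneRed B GWCR := by
  obtain ⟨p, hp, hB⟩ := hB
  obtain ⟨f, hf, hmono, hfp⟩ := exists_stage hp
  obtain ⟨S, -, P, hP⟩ := Sys.exists_denotes hf baseSys
  obtain ⟨g, hg⟩ := exists_fresh S.sig
  obtain ⟨q, hq⟩ := exists_fresh ((g, 1) :: S.sig)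
  refine ⟨fun n => Encodable.encode
    ((q, 3) :: (g, 1) :: S.sig, searchRules P g q n ++ S.R), ?_, fun n => ?_⟩
  · refine Primrec.to_comp (Primrec.encode.comp ((Primrec.const _).pair ?_))
    exact Primrec.list_append.comp (primrec_searchRules P g q) (.const _)
  · rw [← wcr_search_iff hP hg hq (hmono n), hB]
    simp only [hfp]

/-- Weak ground confluence (weak confluence on every ground term over the
signature) of a finite TRS is Π⁰₂-complete. -/
theorem ground_wcr_uniform_Pi02Complete :
    Pi02Complete { n : ℕ | ∃ (sig : List (ℕ × ℕ)) (R : List (Term × Term)),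
      WFTRS sig R ∧ n = Nat.pair (encodeSig sig) (encodeTRS R) ∧
      ∀ t : Term, WFTerm sig t → Ground t → WCRon R t } :=
  ⟨pi02_GWCR, hard_GWCR⟩
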